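/- For every natural number r ≥ 1, the series ∑_{n=1}^∞ (1/(4^n · α^{2rn} · L_{2r}^n)) · binom(2n,n) · H_n equals (2α^r √(L_{2r})/√(α^{2r} L_{2r} − 1)) · ln((α^r √(L_{2r}) + √(α^{2r} L_{2r} − 1))/(2√(α^{2r} L_{2r} − 1))). -/

import Mathlib

/-!
Put `y = 1 / (α ^ (2r) * L_{2r})`, which lies in `(0, 1)`, and `a n = binom(2n, n) / 4 ^ n`. The
claim is the value at `y` of the generating function `f x = ∑ a n * H n * x ^ n`, namely
`f x = 2 / s * log ((1 + s) / (2 * s))` with `s = √(1 - x)`, valid for `|x| < 1` (`gen_harmonic`).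

The recurrence `(n + 1) * a (n + 1) = (n + 1/2) * a n` turns into differential equations. For
`g x = ∑ a n * x ^ n` it gives `(1 - x) * g' = g / 2`, so that `g * s` is constant and `g = 1 / s`
(`gen_central`). For `f` it gives `(1 - x) * f' = f / 2 + q` with `q x = ∑ a (n + 1) * x ^ n`, where
`g = 1 + x * q` forces `q = 1 / (s * (1 + s))`. Hence `f * s` and `2 * log ((1 + s) / (2 * s))` have
the same derivative `1 / (s ^ 2 * (1 + s))` on `(-1, 1)`, and they agree at `0`.
-/

open Real

/-- The `n`-th harmonic number `H n = ∑_{k=1}^n 1/k`. -/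
noncomputable def H (n : ℕ) : ℝ := ∑ k ∈ Finset.range n, 1 / (k + 1 : ℝ)

/-- The golden ratio `α = (1 + √5)/2`. -/
noncomputable def α : ℝ := (1 + Real.sqrt 5) / 2

/-- The Lucas numbers: `L 0 = 2`, `L 1 = 1`, `L (n+2) = L (n+1) + L n`. -/
def lucas : ℕ → ℕ
  | 0 => 2
  | 1 => 1
  | n + 2 => lucas (n + 1) + lucas n

/-- The normalized central binomial coefficient `binom(2n, n) / 4 ^ n`. -/
noncomputable def cb (n : ℕ) : ℝ := (Nat.centralBinom n : ℝ) / 4 ^ n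

lemma cb_zero : cb 0 = 1 := by simp [cb]

lemma cb_rec (n : ℕ) : ((n : ℝ) + 1) * cb (n + 1) = (n + 1 / 2) * cb n := by
  have h : ((n : ℝ) + 1) * (Nat.centralBinom (n + 1) : ℝ)
      = 2 * (2 * n + 1) * (Nat.centralBinom n : ℝ) := by
    exact_mod_cast Nat.succ_mul_centralBinom_succ n
  unfold cb
  rw [pow_succ]
  field_simp
  linarith

lemma cb_nonneg (n : ℕ) : 0 ≤ cb n := by unfold cb; positivity

lemma cb_le_one (n : ℕ) : cb n ≤ 1 := by
  induction n with
  | zero => simp [cb_zero]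
  | succ k ih =>
    have h := cb_rec k
    have h0 := cb_nonneg k
    have hk : (0 : ℝ) ≤ k := Nat.cast_nonneg k
    nlinarith [mul_nonneg hk h0]

lemma H_zero : H 0 = 0 := by simp [H]

lemma H_succ (n : ℕ) : H (n + 1) = H n + 1 / (n + 1) := by
  simp [H, Finset.sum_range_succ]

lemma H_nonneg (n : ℕ) : 0 ≤ H n := by
  unfold H
  exact Finset.sum_nonneg fun k _ => by positivity

lemma H_le (n : ℕ) : H n ≤ n := by
  induction n with
  | zero => simp [H_zero]
  | succ k ih =>
    rw [H_succ]
    have : 1 / ((k : ℝ) + 1) ≤ 1 := by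
      rw [div_le_one (by positivity)]
      linarith [(Nat.cast_nonneg k : (0 : ℝ) ≤ k)]
    push_cast
    linarith

lemma summable_sq_geom {ρ : ℝ} (h : |ρ| < 1) : Summable fun n : ℕ => ((n : ℝ) + 1) ^ 2 * ρ ^ n := by
  have h2 := summable_pow_mul_geometric_of_norm_lt_one 2 (r := ρ) (by simpa using h)
  have h1 := summable_pow_mul_geometric_of_norm_lt_one 1 (r := ρ) (by simpa using h)
  have h0 := summable_pow_mul_geometric_of_norm_lt_one 0 (r := ρ) (by simpa using h)
  refine ((h2.add (h1.mul_left 2)).add h0).congr fun n => ?_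
  ring

lemma summable_of_bound {c : ℕ → ℝ} (hc : ∀ n, |c n| ≤ ((n : ℝ) + 1) ^ 2) {x : ℝ} (hx : |x| < 1) :
    Summable fun n => c n * x ^ n := by
  refine Summable.of_norm_bounded (summable_sq_geom (ρ := |x|) (by simpa using hx)) fun n => ?_
  rw [norm_mul, norm_pow, Real.norm_eq_abs, Real.norm_eq_abs]
  exact mul_le_mul_of_nonneg_right (hc n) (by positivity)

/-- Termwise differentiation, inside the unit disc, of a power series with linearly bounded
coefficients. -/
lemma hasDerivAt_series {c : ℕ → ℝ} (hc : ∀ n, |c n| ≤ (n : ℝ) + 1) {x : ℝ} (hx : |x| < 1) :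
    HasDerivAt (fun z => ∑' n, c n * z ^ n) (∑' n : ℕ, ((n : ℝ) + 1) * c (n + 1) * x ^ n) x := by
  have hc2 : ∀ n : ℕ, |c n| ≤ ((n : ℝ) + 1) ^ 2 := fun n => (hc n).trans (by
    have : (0 : ℝ) ≤ n := Nat.cast_nonneg n
    nlinarith)
  obtain ⟨ρ, hxρ, hρ1⟩ := exists_between hx
  have hρ0 : 0 < ρ := (abs_nonneg x).trans_lt hxρ
  have hu : Summable fun n : ℕ => ((n : ℝ) + 1) ^ 2 * ρ ^ n * ρ⁻¹ :=
    (summable_sq_geom (by rwa [abs_of_pos hρ0])).mul_right _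
  have hb : ∀ (n : ℕ) (z : ℝ), z ∈ Metric.ball (0 : ℝ) ρ →
      ‖c n * ((n : ℝ) * z ^ (n - 1))‖ ≤ ((n : ℝ) + 1) ^ 2 * ρ ^ n * ρ⁻¹ := by
    intro n z hz
    rw [mem_ball_zero_iff, Real.norm_eq_abs] at hz
    rcases n with _ | n
    · simp; positivity
    · have e : ρ ^ (n + 1) * ρ⁻¹ = ρ ^ n := by rw [pow_succ, mul_inv_cancel_right₀ hρ0.ne']
      rw [mul_assoc, e, norm_mul, norm_mul, norm_pow, Real.norm_eq_abs, Real.norm_eq_abs,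
        Real.norm_eq_abs, Nat.add_sub_cancel, ← mul_assoc, abs_of_nonneg (Nat.cast_nonneg (α := ℝ) (n + 1))]
      have h1 : |c (n + 1)| * ((n + 1 : ℕ) : ℝ) ≤ (((n + 1 : ℕ) : ℝ) + 1) ^ 2 := by
        rw [sq]
        exact mul_le_mul (hc _) (by linarith) (by positivity) (by positivity)
      exact mul_le_mul h1 (pow_le_pow_left₀ (abs_nonneg z) hz.le n) (by positivity) (by positivity)
  have hxb : x ∈ Metric.ball (0 : ℝ) ρ := by simpa using hxρ
  have key := hasDerivAt_tsum_of_isPreconnected hu Metric.isOpen_ball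
    (convex_ball (0 : ℝ) ρ).isPreconnected
    (g := fun n z => c n * z ^ n) (g' := fun n z => c n * ((n : ℝ) * z ^ (n - 1)))
    (fun n z _ => (hasDerivAt_pow n z).const_mul (c n)) hb hxb (summable_of_bound hc2 hx) hxb
  refine key.congr_deriv ?_
  rw [(Summable.of_norm_bounded hu fun n => hb n x hxb).tsum_eq_zero_add]
  simp only [Nat.cast_zero, zero_mul, mul_zero, zero_add, Nat.add_sub_cancel]
  refine tsum_congr fun n => ?_
  push_cast
  ring

lemma tsum_at_zero (c : ℕ → ℝ) : ∑' n, c n * (0 : ℝ) ^ n = c 0 := by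
  rw [tsum_eq_single 0 fun n hn => by simp [hn]]
  simp

lemma cb_abs_le (n : ℕ) : |cb n| ≤ (n : ℝ) + 1 := by
  rw [abs_of_nonneg (cb_nonneg n)]
  linarith [cb_le_one n, (Nat.cast_nonneg n : (0 : ℝ) ≤ n)]

lemma cbH_abs_le (n : ℕ) : |cb n * H n| ≤ (n : ℝ) + 1 := by
  rw [abs_of_nonneg (mul_nonneg (cb_nonneg n) (H_nonneg n))]
  have := mul_le_mul (cb_le_one n) (H_le n) (H_nonneg n) zero_le_one
  linarith

lemma le_sq_aux {n : ℕ} {a : ℝ} (h : a ≤ (n : ℝ) + 1) : a ≤ ((n : ℝ) + 1) ^ 2 := by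
  have : (0 : ℝ) ≤ n := Nat.cast_nonneg n
  nlinarith

lemma summable_cb {x : ℝ} (hx : |x| < 1) : Summable fun n => cb n * x ^ n :=
  summable_of_bound (fun n => le_sq_aux (cb_abs_le n)) hx

lemma summable_cbH {x : ℝ} (hx : |x| < 1) : Summable fun n => cb n * H n * x ^ n :=
  summable_of_bound (fun n => le_sq_aux (cbH_abs_le n)) hx

lemma summable_n_mul {c : ℕ → ℝ} (hc : ∀ n, |c n| ≤ (n : ℝ) + 1) {x : ℝ} (hx : |x| < 1) :
    Summable fun n : ℕ => (n : ℝ) * c n * x ^ n := by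
  refine summable_of_bound (c := fun n : ℕ => (n : ℝ) * c n) (fun n => ?_) hx
  rw [abs_mul, abs_of_nonneg (Nat.cast_nonneg n), sq]
  exact mul_le_mul (by linarith) (hc n) (abs_nonneg _) (by positivity)

lemma tsum_n_mul {c : ℕ → ℝ} (hc : ∀ n, |c n| ≤ (n : ℝ) + 1) {x : ℝ} (hx : |x| < 1) :
    ∑' n : ℕ, (n : ℝ) * c n * x ^ n = x * ∑' n : ℕ, ((n : ℝ) + 1) * c (n + 1) * x ^ n := by
  rw [(summable_n_mul hc hx).tsum_eq_zero_add, ← tsum_mul_left]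
  simp only [Nat.cast_zero, zero_mul, zero_add]
  refine tsum_congr fun n => ?_
  push_cast
  ring

/-- The differential equation `(1 - x) * g' = g / 2` for `g x = ∑ a n * x ^ n`. -/
lemma ode_central {x : ℝ} (hx : |x| < 1) :
    (1 - x) * ∑' n : ℕ, ((n : ℝ) + 1) * cb (n + 1) * x ^ n = 1 / 2 * ∑' n, cb n * x ^ n := by
  have h : ∑' n : ℕ, ((n : ℝ) + 1) * cb (n + 1) * x ^ n
      = ∑' n : ℕ, (n : ℝ) * cb n * x ^ n + 1 / 2 * ∑' n, cb n * x ^ n := by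
    rw [← tsum_mul_left, ← (summable_n_mul cb_abs_le hx).tsum_add ((summable_cb hx).mul_left _)]
    refine tsum_congr fun n => ?_
    rw [cb_rec]
    ring
  rw [tsum_n_mul cb_abs_le hx] at h
  linarith

lemma summable_cb_succ {x : ℝ} (hx : |x| < 1) : Summable fun n => cb (n + 1) * x ^ n := by
  refine summable_of_bound (c := fun n => cb (n + 1)) (fun n => le_sq_aux ?_) hx
  rw [abs_of_nonneg (cb_nonneg _)]
  linarith [cb_le_one (n + 1), (Nat.cast_nonneg n : (0 : ℝ) ≤ n)]

/-- The differential equation `(1 - x) * f' = f / 2 + q` for `f x = ∑ a n * H n * x ^ n`, where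
`q x = ∑ a (n + 1) * x ^ n`. -/
lemma ode_harmonic {x : ℝ} (hx : |x| < 1) :
    (1 - x) * ∑' n : ℕ, ((n : ℝ) + 1) * (cb (n + 1) * H (n + 1)) * x ^ n
      = 1 / 2 * ∑' n, cb n * H n * x ^ n + ∑' n, cb (n + 1) * x ^ n := by
  have h : ∑' n : ℕ, ((n : ℝ) + 1) * (cb (n + 1) * H (n + 1)) * x ^ n
      = ∑' n : ℕ, (n : ℝ) * (cb n * H n) * x ^ n
        + (1 / 2 * ∑' n, cb n * H n * x ^ n + ∑' n, cb (n + 1) * x ^ n) := by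
    rw [← tsum_mul_left, ← ((summable_cbH hx).mul_left _).tsum_add (summable_cb_succ hx),
      ← (summable_n_mul cbH_abs_le hx).tsum_add
        (((summable_cbH hx).mul_left _).add (summable_cb_succ hx))]
    refine tsum_congr fun n => ?_
    have e := cb_rec n
    have hn : ((n : ℝ) + 1) ≠ 0 := by positivity
    have e2 : ((n : ℝ) + 1) * (cb (n + 1) * H (n + 1))
        = (n + 1 / 2) * cb n * H n + cb (n + 1) := by
      rw [H_succ, ← e]
      field_simp
    rw [e2]
    ring
  rw [tsum_n_mul cbH_abs_le hx] at h
  linarith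

lemma hasDerivAt_sqrt_one_sub {x : ℝ} (hx : |x| < 1) :
    HasDerivAt (fun z : ℝ => √(1 - z)) (-1 / (2 * √(1 - x))) x :=
  ((hasDerivAt_id x).const_sub 1).sqrt (by simp; linarith [(abs_lt.1 hx).2])

/-- A function with vanishing derivative on `(-1, 1)` is constant there. -/
lemma eq_at_zero {F : ℝ → ℝ} (hF : ∀ x : ℝ, |x| < 1 → HasDerivAt F 0 x) {x : ℝ} (hx : |x| < 1) :
    F x = F 0 := by
  have hb : ∀ z ∈ Metric.ball (0 : ℝ) 1, |z| < 1 := fun z hz => by simpa using hz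
  exact Metric.isOpen_ball.is_const_of_deriv_eq_zero (convex_ball (0 : ℝ) 1).isPreconnected
    (fun z hz => (hF z (hb z hz)).differentiableAt.differentiableWithinAt)
    (fun z hz => (hF z (hb z hz)).deriv) (by simpa using hx) (by simp)

/-- The generating function of the normalized central binomial coefficients. -/
lemma gen_central {x : ℝ} (hx : |x| < 1) : (∑' n, cb n * x ^ n) * √(1 - x) = 1 := by
  have h := eq_at_zero (F := fun z => (∑' n, cb n * z ^ n) * √(1 - z)) (fun z hz => by
    have hpos : 0 < 1 - z := by linarith [(abs_lt.1 hz).2]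
    have hs : 0 < √(1 - z) := Real.sqrt_pos.2 hpos
    have hs2 : √(1 - z) ^ 2 = 1 - z := Real.sq_sqrt hpos.le
    refine ((hasDerivAt_series cb_abs_le hz).mul (hasDerivAt_sqrt_one_sub hz)).congr_deriv ?_
    have o := ode_central hz
    rw [← hs2] at o
    field_simp
    linarith) hx
  simpa [tsum_at_zero, cb_zero] using h

lemma gen_central_shift {x : ℝ} (hx : |x| < 1) :
    ∑' n, cb (n + 1) * x ^ n = 1 / (√(1 - x) * (1 + √(1 - x))) := by
  have hpos : 0 < 1 - x := by linarith [(abs_lt.1 hx).2]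
  have hs : 0 < √(1 - x) := Real.sqrt_pos.2 hpos
  have hs2 : √(1 - x) ^ 2 = 1 - x := Real.sq_sqrt hpos.le
  by_cases h0 : x = 0
  · subst h0
    rw [tsum_at_zero fun n => cb (n + 1)]
    have := cb_rec 0
    rw [cb_zero] at this
    norm_num at this ⊢
    linarith
  · have g := gen_central hx
    rw [(summable_cb hx).tsum_eq_zero_add] at g
    have e : ∑' n, cb (n + 1) * x ^ (n + 1) = x * ∑' n, cb (n + 1) * x ^ n := by
      rw [← tsum_mul_left]
      exact tsum_congr fun n => by ring
    rw [e, cb_zero] at g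
    rw [eq_div_iff (by positivity)]
    refine mul_left_cancel₀ h0 ?_
    linear_combination (1 + √(1 - x)) * g - hs2

/-- The generating function of `binom(2n, n) / 4 ^ n * H n`. -/
lemma gen_harmonic {x : ℝ} (hx : |x| < 1) :
    (∑' n, cb n * H n * x ^ n) * √(1 - x) = 2 * log ((1 + √(1 - x)) / (2 * √(1 - x))) := by
  have h := eq_at_zero (F := fun z => (∑' n, cb n * H n * z ^ n) * √(1 - z)
      - 2 * log ((1 + √(1 - z)) / (2 * √(1 - z)))) (fun z hz => by
    have hpos : 0 < 1 - z := by linarith [(abs_lt.1 hz).2]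
    have hs : 0 < √(1 - z) := Real.sqrt_pos.2 hpos
    have hs2 : √(1 - z) ^ 2 = 1 - z := Real.sq_sqrt hpos.le
    have d := hasDerivAt_sqrt_one_sub hz
    have dl := (((d.const_add 1).div (d.const_mul 2) (mul_pos two_pos hs).ne').log
      (div_pos (add_pos one_pos hs) (mul_pos two_pos hs)).ne').const_mul 2
    refine (((hasDerivAt_series cbH_abs_le hz).mul d).sub dl).congr_deriv ?_
    have o := ode_harmonic hz
    rw [gen_central_shift hz] at o
    simp only [Pi.div_apply]
    clear d dl
    generalize √(1 - z) = s at *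
    rw [← hs2] at o
    field_simp at o ⊢
    linear_combination o) hx
  have h1 : (1 + 1 : ℝ) / 2 = 1 := by norm_num
  simp only [sub_zero, Real.sqrt_one, mul_one, h1, Real.log_one, mul_zero,
    tsum_at_zero fun n => cb n * H n, H_zero] at h
  linarith

lemma three_le_lucas (n : ℕ) : 3 ≤ lucas (n + 2) := by
  suffices h : 3 ≤ lucas (n + 2) ∧ 1 ≤ lucas (n + 1) from h.1
  induction n with
  | zero => decide
  | succ k ih =>
    have : lucas (k + 1 + 2) = lucas (k + 2) + lucas (k + 1) := rfl
    have e : k + 1 + 1 = k + 2 := rfl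
    rw [e]
    omega

theorem stmt_2 (r : ℕ) (hr : 1 ≤ r) :
    ∑' n : ℕ,
        (1 / ((4 : ℝ) ^ (n + 1) * α ^ (2 * r * (n + 1)) *
          ((lucas (2 * r) : ℝ)) ^ (n + 1))) *
        (Nat.choose (2 * (n + 1)) (n + 1) : ℝ) * H (n + 1)
      = 2 * α ^ r * Real.sqrt (lucas (2 * r) : ℝ) /
          Real.sqrt (α ^ (2 * r) * (lucas (2 * r) : ℝ) - 1) *
        Real.log ((α ^ r * Real.sqrt (lucas (2 * r) : ℝ) +
            Real.sqrt (α ^ (2 * r) * (lucas (2 * r) : ℝ) - 1)) /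
          (2 * Real.sqrt (α ^ (2 * r) * (lucas (2 * r) : ℝ) - 1))) := by
  have hα : 1 ≤ α := by
    have : (1 : ℝ) ≤ √5 := Real.one_le_sqrt.2 (by norm_num)
    unfold α
    linarith
  obtain ⟨m, hm⟩ : ∃ m, 2 * r = m + 2 := ⟨2 * r - 2, by omega⟩
  have hL : (3 : ℝ) ≤ lucas (2 * r) := by
    rw [hm]
    exact_mod_cast three_le_lucas m
  generalize (lucas (2 * r) : ℝ) = Λ at hL ⊢
  have hA1 : 1 ≤ α ^ r := one_le_pow₀ hα
  simp only [mul_comm 2 r, mul_assoc r 2, pow_mul α r] at *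
  generalize α ^ r = A at hA1 ⊢
  have hA2 : 1 ≤ A ^ 2 := one_le_pow₀ hA1
  have hA : 0 < A := by linarith
  have hD : 1 < A ^ 2 * Λ := by nlinarith
  have hD0 : 0 < A ^ 2 * Λ := by linarith
  set y : ℝ := 1 / (A ^ 2 * Λ) with hy
  have hy1 : |y| < 1 := by
    rw [abs_of_pos (by positivity), hy, div_lt_one hD0]
    exact hD
  have hf := gen_harmonic hy1
  rw [(summable_cbH hy1).tsum_eq_zero_add] at hf
  have hsum : ∑' n : ℕ, (1 / ((4 : ℝ) ^ (n + 1) * A ^ (2 * (n + 1)) * Λ ^ (n + 1))) *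
      (Nat.choose (2 * (n + 1)) (n + 1) : ℝ) * H (n + 1)
      = ∑' n, cb (n + 1) * H (n + 1) * y ^ (n + 1) := by
    refine tsum_congr fun n => ?_
    rw [hy, cb, Nat.centralBinom_eq_two_mul_choose, pow_mul A, div_pow, one_pow, mul_pow]
    field_simp
  rw [H_zero, mul_zero, zero_mul, zero_add, ← hsum] at hf
  -- `√(1 - y) = √(A² Λ - 1) / (A √Λ)` turns the generating function into the claimed form.
  have hs : √(1 - y) = √(A ^ 2 * Λ - 1) / (A * √Λ) := by
    have e : 1 - y = (A ^ 2 * Λ - 1) / (A ^ 2 * Λ) := by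
      rw [hy]
      field_simp
    rw [e, Real.sqrt_div (by linarith), Real.sqrt_mul (by positivity), Real.sqrt_sq hA.le]
  have hT : 0 < √(A ^ 2 * Λ - 1) := Real.sqrt_pos.2 (by linarith)
  have hQ : 0 < √Λ := Real.sqrt_pos.2 (by linarith)
  rw [hs] at hf
  generalize √(A ^ 2 * Λ - 1) = T at *
  generalize √Λ = Q at *
  have hlog : (1 + T / (A * Q)) / (2 * (T / (A * Q))) = (A * Q + T) / (2 * T) := by
    field_simp
  rw [hlog] at hf
  generalize log ((A * Q + T) / (2 * T)) = l at *
  field_simp at hf ⊢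
  linarith
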